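/- For any i ∈ {1,…,V}, a subset A ⊆ {1,…,V}\{i} is an adversary set for i if and only if A ∪ {i} does not contain the support of any codeword of C^⊥ that is minimal with respect to i. -/

import Mathlib

open Matrix

/-- The dual code of a linear code `C ⊆ 𝔽_q^V`:
`C^⊥ = {x ∈ 𝔽_q^V : x·c = 0 for all c ∈ C}`. -/
def dualCode {F : Type*} [Field F] {V : ℕ} (C : Submodule F (Fin V → F)) :
    Submodule F (Fin V → F) where
  carrier := {x | ∀ c ∈ C, x ⬝ᵥ c = 0}
  add_mem' := fun ha hb c hc => by
    simp only [Set.mem_setOf_eq] at *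
    simp [add_dotProduct, ha c hc, hb c hc]
  zero_mem' := fun c _ => by simp
  smul_mem' := fun a x hx => by
    intro c hc
    simp only [Set.mem_setOf_eq] at hx
    simp [smul_dotProduct, hx c hc]

/-- A codeword `c` of a code `D ⊆ 𝔽_q^V` is minimal with respect to coordinate `i`
if `c ∈ D`, `c_i = 1`, and there is no other codeword of `D` whose `i`-th component
is `1` with support strictly contained in that of `c`. -/
def IsMinimalWrt {F : Type*} [Field F] {V : ℕ} (D : Submodule F (Fin V → F))
    (i : Fin V) (c : Fin V → F) : Prop :=
  c ∈ D ∧ c i = 1 ∧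
    ¬ ∃ c' ∈ D, c' ≠ c ∧ c' i = 1 ∧ Function.support c' ⊂ Function.support c

theorem mem_dualCode_iff_rows {F : Type*} [Field F] {V k : ℕ}
    (C : Submodule F (Fin V → F)) (G : Matrix (Fin k) (Fin V) F)
    (hGspan : Submodule.span F (Set.range fun i : Fin k => G i) = C) (x : Fin V → F) :
    x ∈ dualCode C ↔ ∀ s, ∑ j, x j * G s j = 0 := by
  constructor
  · intro h s
    exact h (G s) (hGspan ▸ Submodule.subset_span ⟨s, rfl⟩)
  · intro h c hc
    rw [← hGspan] at hc
    induction hc using Submodule.span_induction with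
    | mem y hy => obtain ⟨s, rfl⟩ := hy; exact h s
    | zero => simp
    | add y z _ _ hy hz => rw [dotProduct_add, hy, hz, add_zero]
    | smul a y _ hy => rw [dotProduct_smul, hy, smul_zero]

theorem exists_minimal_wrt {F : Type*} [Field F] {V : ℕ} (D : Submodule F (Fin V → F))
    (i : Fin V) (n : ℕ) : ∀ c ∈ D, c i = 1 → (Function.support c).ncard = n →
    ∃ c', IsMinimalWrt D i c' ∧ Function.support c' ⊆ Function.support c := by
  induction n using Nat.strong_induction_on with
  | _ n ih =>
    intro c hc hci hn
    by_cases h : ∃ c' ∈ D, c' ≠ c ∧ c' i = 1 ∧ Function.support c' ⊂ Function.support c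
    · obtain ⟨c', hc', _, hi', hs⟩ := h
      obtain ⟨d, hd, hds⟩ := ih _ (hn ▸ Set.ncard_lt_ncard hs (Set.toFinite _)) c' hc' hi' rfl
      exact ⟨d, hd, hds.trans hs.subset⟩
    · exact ⟨c, ⟨hc, hci, h⟩, subset_rfl⟩

/-- For any `i`, a subset `A ⊆ {1,…,V}\{i}` is an adversary set for
`i` (i.e. `g_i` is not in the `𝔽_q`-span of `{g_j : j ∈ A}`) iff `A ∪ {i}` does not
contain the support of any codeword of `C^⊥` minimal with respect to `i`. -/
theorem stmt_17 {F : Type*} [Field F] [Fintype F] [DecidableEq F] {V k : ℕ}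
    (C : Submodule F (Fin V → F)) (hCk : Module.finrank F C = k)
    (hdC : ∀ c ∈ C, c ≠ 0 → 2 ≤ hammingNorm c)
    (hdD : ∀ c ∈ dualCode C, c ≠ 0 → 2 ≤ hammingNorm c)
    (G : Matrix (Fin k) (Fin V) F)
    (hGspan : Submodule.span F (Set.range fun i : Fin k => G i) = C)
    (hGli : LinearIndependent F (fun i : Fin k => G i))
    (i : Fin V) (A : Set (Fin V)) (hiA : i ∉ A) :
    (fun s => G s i) ∉ Submodule.span F ((fun j => fun s => G s j) '' A) ↔
      ¬ ∃ c, IsMinimalWrt (dualCode C) i c ∧ Function.support c ⊆ A ∪ {i} := by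
  rw [not_iff_not]
  constructor
  · intro h
    rw [Finsupp.mem_span_image_iff_linearCombination] at h
    obtain ⟨l, hl, hlG⟩ := h
    rw [Finsupp.mem_supported] at hl
    have hli : l i = 0 := by
      by_contra hne
      exact hiA (hl (by simpa using hne))
    have hrow : ∀ s, ∑ j, l j * G s j = G s i := by
      intro s
      have := congrFun hlG s
      rw [Finsupp.linearCombination_apply, Finsupp.sum_fintype _ _ (by simp)] at this
      simpa [Finset.sum_apply] using this
    have hx : (Pi.single i 1 - (l : Fin V → F)) ∈ dualCode C := by
      rw [mem_dualCode_iff_rows C G hGspan]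
      intro s
      simp [sub_mul, Finset.sum_sub_distrib, hrow, Pi.single_apply]
    obtain ⟨c, hc, hcs⟩ := exists_minimal_wrt (dualCode C) i _ _ hx (by simp [hli]) rfl
    refine ⟨c, hc, hcs.trans ?_⟩
    intro j hj
    by_cases hji : j = i
    · right; exact hji
    · left
      apply hl
      simpa [hji] using hj
  · rintro ⟨c, ⟨hc, hci, -⟩, hcs⟩
    rw [mem_dualCode_iff_rows C G hGspan] at hc
    have heq : (fun s => G s i) =
        ∑ j ∈ Finset.univ.erase i, (-c j) • (fun s => G s j) := by
      funext s
      have := hc s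
      rw [← Finset.add_sum_erase _ _ (Finset.mem_univ i), hci, one_mul] at this
      simp only [Finset.sum_apply, Pi.smul_apply, smul_eq_mul, neg_mul, Finset.sum_neg_distrib]
      exact eq_neg_of_add_eq_zero_left this
    rw [heq]
    refine Submodule.sum_mem _ fun j hj => ?_
    by_cases hcj : c j = 0
    · simp [hcj]
    · refine Submodule.smul_mem _ _ (Submodule.subset_span ⟨j, ?_, rfl⟩)
      exact (hcs hcj).resolve_right (Finset.ne_of_mem_erase hj)
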